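/- Let G be a graph with arranged degree sequence d_1 ≥ ... ≥ d_n and let k = ν(G) be its matching number. Then 2(d_1 + ... + d_k) + (d_{k+1} + ... + d_{2k}) ≥ 2m(G). -/

import Mathlib

open scoped Classical

/-- `M` is a matching in `G`, represented as a finite set of edges. -/
def IsMatchingSet {V : Type*} (G : SimpleGraph V) (M : Finset (Sym2 V)) : Prop :=
  (∀ e ∈ M, e ∈ G.edgeSet) ∧
  ∀ e ∈ M, ∀ f ∈ M, e ≠ f → ∀ v : V, ¬(v ∈ e ∧ v ∈ f)

/-- `M` is a maximal matching in `G`. -/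
def IsMaximalMatchingSet {V : Type*} (G : SimpleGraph V) (M : Finset (Sym2 V)) : Prop :=
  IsMatchingSet G M ∧ ∀ e ∈ G.edgeSet, e ∉ M → ¬ IsMatchingSet G (insert e M)

/-- The set `V_M` of vertices covered (matched) by the matching `M`. -/
noncomputable def matchedSet {V : Type*} [Fintype V] (M : Finset (Sym2 V)) : Finset V :=
  Finset.univ.filter (fun v => ∃ e ∈ M, v ∈ e)

/-!
Split `2m(G) = ∑ deg v` over the `2k` vertices covered by `M` and the unmatched ones. The covered
part is at most `d₁ + ⋯ + d_{2k}`, so it remains to bound the unmatched part by `d₁ + ⋯ + d_k`.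
Without augmenting paths of length one, every edge at an unmatched vertex ends at a covered one, so
the unmatched part counts the edges between the two sides. Without augmenting paths of length three,
at most one end of an edge `xy ∈ M` has unmatched neighbours, unless both have the same single one;
either way the edges from `x` and `y` to unmatched vertices number at most `deg x` or at most
`deg y`. Choosing that end in every edge of `M` bounds the unmatched part by the degree sum of `k`
distinct vertices.
-/

open Finset

section SumLeSum

variable {ι κ N : Type*} [AddCommMonoid N] [PartialOrder N] [IsOrderedAddMonoid N]

lemma sum_le_sum_of_card_le_of_forall_le {s : Finset ι} {t : Finset κ} {f : ι → N} {g : κ → N}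
    (hcard : #s ≤ #t) (hg : ∀ j ∈ t, 0 ≤ g j) (hfg : ∀ i ∈ s, ∀ j ∈ t, f i ≤ g j) :
    ∑ i ∈ s, f i ≤ ∑ j ∈ t, g j := by
  obtain ⟨t', ht', hcard'⟩ := exists_subset_card_eq hcard
  let φ : s ≃ t' := equivOfCardEq hcard'.symm
  calc ∑ i ∈ s, f i = ∑ i : s, f i := (sum_coe_sort s f).symm
    _ ≤ ∑ i : s, g (φ i) := sum_le_sum fun i _ ↦ hfg i i.2 _ (ht' (φ i).2)
    _ = ∑ j : t', g j := φ.sum_comp fun j ↦ g j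
    _ = ∑ j ∈ t', g j := sum_coe_sort t' g
    _ ≤ ∑ j ∈ t, g j := sum_le_sum_of_subset_of_nonneg ht' fun j hj _ ↦ hg j hj

lemma sum_le_sum_of_antitone_of_isLowerSet [LinearOrder ι] {s t : Finset ι} {f : ι → N}
    (hf : Antitone f) (hf₀ : ∀ i ∈ t, 0 ≤ f i) (ht : IsLowerSet (t : Set ι)) (hcard : #s ≤ #t) :
    ∑ i ∈ s, f i ≤ ∑ i ∈ t, f i := by
  have hsdiff : ∑ i ∈ s \ t, f i ≤ ∑ i ∈ t \ s, f i := by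
    refine sum_le_sum_of_card_le_of_forall_le (card_sdiff_le_card_sdiff_iff.2 hcard)
      (fun j hj ↦ hf₀ j (mem_sdiff.1 hj).1) fun i hi j hj ↦ hf ?_
    exact le_of_not_ge fun hij ↦ (mem_sdiff.1 hi).2 (ht hij (mem_sdiff.1 hj).1)
  calc ∑ i ∈ s, f i = ∑ i ∈ s ∩ t, f i + ∑ i ∈ s \ t, f i := (sum_inter_add_sum_sdiff s t f).symm
    _ ≤ ∑ i ∈ t ∩ s, f i + ∑ i ∈ t \ s, f i := by rw [inter_comm]; gcongr
    _ = ∑ i ∈ t, f i := sum_inter_add_sum_sdiff t s f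

lemma sum_le_sum_filter_val_lt_of_antitone {n k : ℕ} {f : ι → N} (hf₀ : ∀ v, 0 ≤ f v)
    (σ : Fin n ≃ ι) (hf : Antitone (f ∘ σ)) {s : Finset ι} (hs : #s ≤ k) :
    ∑ v ∈ s, f v ≤ ∑ i ∈ {i : Fin n | i < k}, f (σ i) := by
  have hlower : IsLowerSet (({i : Fin n | i < k} : Finset (Fin n)) : Set (Fin n)) := by
    intro i j hji hi
    simp only [coe_filter, mem_univ, true_and, Set.mem_ofPred_eq] at hi ⊢
    omega
  have hcard : #(s.map σ.symm.toEmbedding) ≤ #{i : Fin n | i < k} := by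
    rw [Fin.card_filter_val_lt]
    exact le_min (card_finset_fin_le _) ((card_map _).trans_le hs)
  simpa using sum_le_sum_of_antitone_of_isLowerSet hf (fun i _ ↦ hf₀ (σ i)) hlower hcard

end SumLeSum

lemma sum_filter_val_lt_add_sum_filter_le_val {N : Type*} [AddCommMonoid N] {n k l : ℕ}
    (hkl : k ≤ l) (f : Fin n → N) :
    ∑ i ∈ {i : Fin n | i < k}, f i + ∑ i ∈ {i : Fin n | k ≤ i ∧ i < l}, f i =
      ∑ i ∈ {i : Fin n | i < l}, f i := by
  rw [← sum_filter_add_sum_filter_not {i : Fin n | i < l} (fun i ↦ (i : ℕ) < k), filter_filter,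
    filter_filter]
  congr! 3 <;> grind

section Matching

variable {V : Type*} {G : SimpleGraph V} {M N : Finset (Sym2 V)} {e f : Sym2 V} {u v w : V}

/-- The vertex `v` is *unmatched* by `M`: no edge of `M` covers it. On a finite vertex set this is
non-membership in `matchedSet M`, but no finiteness is required here. -/
def IsUnmatched (M : Finset (Sym2 V)) (v : V) : Prop :=
  ∀ e ∈ M, v ∉ e

lemma IsUnmatched.mono (hv : IsUnmatched M v) (hNM : N ⊆ M) : IsUnmatched N v :=
  fun e he ↦ hv e (hNM he)

protected lemma IsUnmatched.insert (hw : IsUnmatched M w) (hwu : w ≠ u) (hwv : w ≠ v) :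
    IsUnmatched (insert s(u, v) M) w := by
  simpa [IsUnmatched, hwu, hwv] using hw

lemma IsUnmatched.ne_of_mem (hv : IsUnmatched M v) (he : e ∈ M) (hu : u ∈ e) : v ≠ u := by
  rintro rfl
  exact hv e he hu

lemma IsUnmatched.card_insert (hu : IsUnmatched M u) (v : V) : #(insert s(u, v) M) = #M + 1 :=
  card_insert_of_notMem fun h ↦ hu _ h (Sym2.mem_mk_left u v)

namespace IsMatchingSet

lemma mono (hM : IsMatchingSet G M) (hNM : N ⊆ M) : IsMatchingSet G N :=
  ⟨fun e he ↦ hM.1 e (hNM he), fun e he f hf ↦ hM.2 e (hNM he) f (hNM hf)⟩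

lemma eq_of_mem (hM : IsMatchingSet G M) (he : e ∈ M) (hf : f ∈ M) (hve : v ∈ e) (hvf : v ∈ f) :
    e = f :=
  by_contra fun hef ↦ hM.2 e he f hf hef v ⟨hve, hvf⟩

lemma isUnmatched_erase (hM : IsMatchingSet G M) (he : e ∈ M) (hv : v ∈ e) :
    IsUnmatched (M.erase e) v :=
  fun _ hf hvf ↦ ne_of_mem_erase hf (hM.eq_of_mem (mem_of_mem_erase hf) he hvf hv)

protected lemma insert (hM : IsMatchingSet G M) (huv : G.Adj u v) (hu : IsUnmatched M u)
    (hv : IsUnmatched M v) : IsMatchingSet G (insert s(u, v) M) := by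
  have hdisj : ∀ e ∈ M, ∀ w ∈ s(u, v), w ∉ e := by
    intro e he w hw
    rcases Sym2.mem_iff.1 hw with rfl | rfl
    exacts [hu e he, hv e he]
  refine ⟨forall_mem_insert _ _ _ |>.2 ⟨huv, hM.1⟩, fun e he f hf hef w ⟨hwe, hwf⟩ ↦ ?_⟩
  rcases mem_insert.1 he with rfl | he <;> rcases mem_insert.1 hf with rfl | hf
  · exact hef rfl
  · exact hdisj f hf w hwe hwf
  · exact hdisj e he w hwf hwe
  · exact hM.2 e he f hf hef w ⟨hwe, hwf⟩

end IsMatchingSet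

/-- There is no `M`-augmenting path of length one or three in `G`, a local condition satisfied by
every matching of maximum size. The first field excludes an edge `uv` between unmatched vertices,
the second a path `u x y v` with `xy ∈ M` and distinct unmatched ends `u`, `v`. -/
structure HasNoShortAugmentingPath (G : SimpleGraph V) (M : Finset (Sym2 V)) : Prop where
  not_adj : ∀ ⦃u v⦄, IsUnmatched M u → IsUnmatched M v → ¬G.Adj u v
  eq_of_adj : ∀ ⦃x y u v⦄, s(x, y) ∈ M → IsUnmatched M u → IsUnmatched M v →
    G.Adj x u → G.Adj y v → u = v

lemma IsMatchingSet.hasNoShortAugmentingPath (hM : IsMatchingSet G M)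
    (hmax : ∀ M' : Finset (Sym2 V), IsMatchingSet G M' → #M' ≤ #M) :
    HasNoShortAugmentingPath G M where
  not_adj u v hu hv huv := by
    have hle := hmax _ (hM.insert huv hu hv)
    rw [hu.card_insert] at hle
    omega
  eq_of_adj x y u v hxy hu hv hxu hyv := by
    by_contra huv
    have hx : x ∈ s(x, y) := Sym2.mem_mk_left x y
    have hy : y ∈ s(x, y) := Sym2.mem_mk_right x y
    have hyx : y ≠ x := (G.mem_edgeSet.1 (hM.1 _ hxy)).ne'
    set M₀ := M.erase s(x, y) with hM₀
    have hM₀M : M₀ ⊆ M := erase_subset _ _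
    have hx₀ : IsUnmatched M₀ x := hM.isUnmatched_erase hxy hx
    have hM₁ : IsMatchingSet G (insert s(x, u) M₀) := (hM.mono hM₀M).insert hxu hx₀ (hu.mono hM₀M)
    have hy₁ : IsUnmatched (insert s(x, u) M₀) y :=
      (hM.isUnmatched_erase hxy hy).insert hyx (hu.ne_of_mem hxy hy).symm
    have hv₁ : IsUnmatched (insert s(x, u) M₀) v :=
      (hv.mono hM₀M).insert (hv.ne_of_mem hxy hx) (Ne.symm huv)
    have hle := hmax _ (hM₁.insert hyv hy₁ hv₁)
    rw [hy₁.card_insert, hx₀.card_insert, hM₀, card_erase_add_one hxy] at hle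
    omega

end Matching

section MatchedSet

variable {V : Type*} [Fintype V] {G : SimpleGraph V} {M : Finset (Sym2 V)} {e : Sym2 V} {v : V}

lemma mem_matchedSet : v ∈ matchedSet M ↔ ∃ e ∈ M, v ∈ e := by
  simp [matchedSet]

lemma mem_compl_matchedSet : v ∈ (matchedSet M)ᶜ ↔ IsUnmatched M v := by
  simp [mem_matchedSet, IsUnmatched]

lemma matchedSet_eq_biUnion (M : Finset (Sym2 V)) : matchedSet M = M.biUnion Sym2.toFinset := by
  ext v
  simp [mem_matchedSet]

lemma IsMatchingSet.sum_matchedSet {N : Type*} [AddCommMonoid N] (hM : IsMatchingSet G M)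
    (f : V → N) : ∑ v ∈ matchedSet M, f v = ∑ e ∈ M, ∑ v ∈ e.toFinset, f v := by
  rw [matchedSet_eq_biUnion]
  refine sum_biUnion fun e he e' he' hne ↦ disjoint_left.2 fun v hv hv' ↦ hne ?_
  exact hM.eq_of_mem he he' (Sym2.mem_toFinset.1 hv) (Sym2.mem_toFinset.1 hv')

lemma IsMatchingSet.card_matchedSet (hM : IsMatchingSet G M) : #(matchedSet M) = 2 * #M := by
  have hcard : ∀ e ∈ M, #e.toFinset = 2 := fun e he ↦
    e.card_toFinset_of_not_isDiag (G.not_isDiag_of_mem_edgeSet (hM.1 e he))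
  rw [card_eq_sum_ones, hM.sum_matchedSet]
  simp only [← card_eq_sum_ones]
  rw [sum_const_nat hcard, mul_comm]

/-- The neighbours of `v` in `G` that `M` leaves unmatched, used to count the edges between covered
and unmatched vertices from the covered side. -/
noncomputable def unmatchedNeighborFinset (G : SimpleGraph V) (M : Finset (Sym2 V)) (v : V) :
    Finset V :=
  {u ∈ G.neighborFinset v | IsUnmatched M u}

lemma mem_unmatchedNeighborFinset {u : V} :
    u ∈ unmatchedNeighborFinset G M v ↔ G.Adj v u ∧ IsUnmatched M u := by
  simp [unmatchedNeighborFinset]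

lemma card_unmatchedNeighborFinset_le_degree (G : SimpleGraph V) (M : Finset (Sym2 V)) (v : V) :
    #(unmatchedNeighborFinset G M v) ≤ G.degree v :=
  card_filter_le _ _

lemma card_unmatchedNeighborFinset_lt_degree {u : V} (hvu : G.Adj v u) (hu : ¬IsUnmatched M u) :
    #(unmatchedNeighborFinset G M v) < G.degree v :=
  card_lt_card <| filter_ssubset.2 ⟨u, by simpa using hvu, hu⟩

namespace HasNoShortAugmentingPath

lemma sum_degree_compl_matchedSet (h : HasNoShortAugmentingPath G M) :
    ∑ u ∈ (matchedSet M)ᶜ, G.degree u = ∑ v ∈ matchedSet M, #(unmatchedNeighborFinset G M v) := by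
  calc ∑ u ∈ (matchedSet M)ᶜ, G.degree u
    _ = ∑ u ∈ (matchedSet M)ᶜ, #((matchedSet M).bipartiteAbove G.Adj u) := by
      refine sum_congr rfl fun u hu ↦ ?_
      rw [← G.card_neighborFinset_eq_degree]
      congr 1
      ext v
      have hv : G.Adj u v → v ∈ matchedSet M := fun huv ↦ by_contra fun hv ↦
        h.not_adj (mem_compl_matchedSet.1 hu) (mem_compl_matchedSet.1 (mem_compl.2 hv)) huv
      simpa [bipartiteAbove] using hv
    _ = ∑ v ∈ matchedSet M, #((matchedSet M)ᶜ.bipartiteBelow G.Adj v) :=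
      sum_card_bipartiteAbove_eq_sum_card_bipartiteBelow G.Adj
    _ = ∑ v ∈ matchedSet M, #(unmatchedNeighborFinset G M v) := by
      refine sum_congr rfl fun v _ ↦ congrArg card ?_
      ext u
      rw [mem_bipartiteBelow, mem_compl_matchedSet, mem_unmatchedNeighborFinset, G.adj_comm,
        and_comm]

lemma exists_sum_card_unmatchedNeighborFinset_le_degree (h : HasNoShortAugmentingPath G M)
    (he : e ∈ M) (heG : e ∈ G.edgeSet) :
    ∃ w ∈ e, ∑ v ∈ e.toFinset, #(unmatchedNeighborFinset G M v) ≤ G.degree w := by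
  induction e using Sym2.ind with | _ x y
  have hadj : G.Adj x y := heG
  rw [Sym2.toFinset_mk_eq, sum_pair hadj.ne]
  obtain hy | ⟨v, hv⟩ := (unmatchedNeighborFinset G M y).eq_empty_or_nonempty
  · refine ⟨x, Sym2.mem_mk_left x y, ?_⟩
    simpa [hy] using card_unmatchedNeighborFinset_le_degree G M x
  · refine ⟨y, Sym2.mem_mk_right x y, ?_⟩
    obtain ⟨hyv, hv⟩ := mem_unmatchedNeighborFinset.1 hv
    have hx_le_one : #(unmatchedNeighborFinset G M x) ≤ 1 := by
      refine (card_le_card fun u hu ↦ mem_singleton.2 ?_).trans_eq (card_singleton v)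
      obtain ⟨hxu, hu⟩ := mem_unmatchedNeighborFinset.1 hu
      exact h.eq_of_adj he hu hv hxu hyv
    have hy_lt : #(unmatchedNeighborFinset G M y) < G.degree y :=
      card_unmatchedNeighborFinset_lt_degree hadj.symm fun hx ↦ hx _ he (Sym2.mem_mk_left x y)
    omega

lemma exists_sum_degree_compl_matchedSet_le (h : HasNoShortAugmentingPath G M)
    (hM : IsMatchingSet G M) :
    ∃ W : Finset V, #W = #M ∧ ∑ u ∈ (matchedSet M)ᶜ, G.degree u ≤ ∑ w ∈ W, G.degree w := by
  choose w hw_mem hw_le using fun e : M ↦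
    h.exists_sum_card_unmatchedNeighborFinset_le_degree e.2 (hM.1 e e.2)
  have hw_inj : Function.Injective w := fun e f hef ↦
    Subtype.ext (hM.eq_of_mem e.2 f.2 (hw_mem e) (hef ▸ hw_mem f))
  refine ⟨univ.map ⟨w, hw_inj⟩, by simp, ?_⟩
  calc ∑ u ∈ (matchedSet M)ᶜ, G.degree u
    _ = ∑ v ∈ matchedSet M, #(unmatchedNeighborFinset G M v) := h.sum_degree_compl_matchedSet
    _ = ∑ e ∈ M, ∑ v ∈ e.toFinset, #(unmatchedNeighborFinset G M v) := hM.sum_matchedSet _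
    _ = ∑ e : M, ∑ v ∈ e.1.toFinset, #(unmatchedNeighborFinset G M v) := (sum_coe_sort M _).symm
    _ ≤ ∑ e : M, G.degree (w e) := sum_le_sum fun e _ ↦ hw_le e
    _ = ∑ v ∈ univ.map ⟨w, hw_inj⟩, G.degree v := (sum_map univ ⟨w, hw_inj⟩ fun v ↦ G.degree v).symm

end HasNoShortAugmentingPath

end MatchedSet

theorem matching_number_degree_inequality_general
    {V : Type*} [Fintype V] {n : ℕ} (G : SimpleGraph V)
    (d : Fin n → ℕ) (hd : Antitone d)
    (σ : Fin n ≃ V) (hσ : ∀ i, G.degree (σ i) = d i)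
    (M : Finset (Sym2 V)) (hM : IsMatchingSet G M) (hpath : HasNoShortAugmentingPath G M) :
    2 * #G.edgeFinset ≤
      2 * (∑ i ∈ {i : Fin n | i < #M}, d i) + ∑ i ∈ {i : Fin n | #M ≤ i ∧ i < 2 * #M}, d i := by
  obtain rfl : (fun i ↦ G.degree (σ i)) = d := funext hσ
  have sum_degree_le {k : ℕ} {S : Finset V} (hS : #S ≤ k) :
      ∑ v ∈ S, G.degree v ≤ ∑ i ∈ {i : Fin n | i < k}, G.degree (σ i) :=
    sum_le_sum_filter_val_lt_of_antitone (f := fun v ↦ G.degree v) (fun _ ↦ Nat.zero_le _)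
      σ hd hS
  obtain ⟨W, hW, hle⟩ := hpath.exists_sum_degree_compl_matchedSet_le hM
  calc 2 * #G.edgeFinset
    _ = ∑ v ∈ matchedSet M, G.degree v + ∑ v ∈ (matchedSet M)ᶜ, G.degree v := by
      rw [sum_add_sum_compl, G.sum_degrees_eq_twice_card_edges]
    _ ≤ ∑ i ∈ {i : Fin n | i < 2 * #M}, G.degree (σ i)
        + ∑ i ∈ {i : Fin n | i < #M}, G.degree (σ i) :=
      add_le_add (sum_degree_le hM.card_matchedSet.le) (hle.trans (sum_degree_le hW.le))
    _ = _ := by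
      rw [← sum_filter_val_lt_add_sum_filter_le_val (Nat.le_mul_of_pos_left #M two_pos)]
      ring

/-- Lower bound on the matching number: if `k = ν(G)` and `d` is the arranged
degree sequence of `G`, then `2(d₁+⋯+d_k) + (d_{k+1}+⋯+d_{2k}) ≥ 2m(G)`. -/
theorem matching_number_degree_inequality
    {V : Type*} [Fintype V] {n : ℕ} (G : SimpleGraph V)
    (d : Fin n → ℕ) (hd : Antitone d)
    (σ : Fin n ≃ V) (hσ : ∀ i, G.degree (σ i) = d i)
    (M : Finset (Sym2 V)) (hM : IsMatchingSet G M)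
    (hmax : ∀ M' : Finset (Sym2 V), IsMatchingSet G M' → M'.card ≤ M.card) :
    2 * G.edgeFinset.card ≤
      2 * (∑ i ∈ Finset.univ.filter (fun i : Fin n => (i : ℕ) < M.card), d i)
        + ∑ i ∈ Finset.univ.filter
            (fun i : Fin n => M.card ≤ (i : ℕ) ∧ (i : ℕ) < 2 * M.card), d i :=
  matching_number_degree_inequality_general G d hd σ hσ M hM (hM.hasNoShortAugmentingPath hmax)
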